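/- Let α ∈ (0,1) be irrational, let X be a complex Banach space, let (λₙ)_{n≥1} be a strictly increasing sequence of positive real numbers with λₙ → +∞, and let (cₙ¹)_{n≥1} and (cₙ²)_{n≥1} be sequences in X with ∑ₙ (‖cₙ¹‖ + ‖cₙ²‖)/λₙ < ∞. Let S₁, S₂ : ℂ → ℂ be entire and let G : ℂ → X be entire, such that G(p) = S₁(p)·∑ₙ cₙ¹/(λₙ + p^α) − S₂(p)·∑ₙ cₙ²/(λₙ + p^α) for every p ∈ ℂ∖(−∞,0]. Then S₁(p)·cₙ¹ = S₂(p)·cₙ² for every p ∈ ℂ and every n ≥ 1. -/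

import Mathlib

open Complex Set Filter

open scoped Topology

/-!
On the logarithmic plane `p = exp w` the branch of `p ^ α` becomes the entire function
`exp (α w)`, so the identity continues analytically to all `w` outside a closed discrete set of
poles. Comparing residues where `exp (α w) = -λₙ` gives `S₁ (exp w) • cₙ¹ = S₂ (exp w) • cₙ²`, since
`G ∘ exp` has no pole there. These `w` form an arithmetic progression of step `2πi / α`, and for
irrational `α` their exponentials are infinitely many points on a single circle. They accumulate, so
the identity theorem applies to the entire functions `S₁ • cₙ¹` and `S₂ • cₙ²`.
-/

section Codiscrete

variable {Y : Type*} [TopologicalSpace Y]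

lemma compl_range_mem_codiscrete_of_tendsto_cocompact {ι : Type*} [T1Space Y]
    [WeaklyLocallyCompactSpace Y] {f : ι → Y} (hf : Tendsto f cofinite (cocompact Y)) :
    (range f)ᶜ ∈ codiscrete Y := by
  rw [mem_codiscrete_accPt, compl_compl]
  intro y hy
  obtain ⟨K, hK, hyK⟩ := exists_compact_mem_nhds y
  have finite_inter : (range f ∩ K).Finite := by
    rw [← image_preimage_eq_range_inter]
    exact (tendsto_cofinite_cocompact_iff.1 hf K hK).image f
  exact Set.Infinite.of_accPt (hy.nhds_inter hyK) (finite_inter.subset (inter_comm _ _).subset)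

lemma nhdsNE_le_codiscrete (y : Y) : 𝓝[≠] y ≤ codiscrete Y := fun s hs => by
  simpa only [disjoint_principal_right, compl_compl] using mem_codiscrete.1 hs y

lemma preimage_mem_codiscrete {Z : Type*} [TopologicalSpace Z] {φ : Z → Y}
    (hφ : ∀ z, Tendsto φ (𝓝[≠] z) (𝓝[≠] (φ z))) {s : Set Y} (hs : s ∈ codiscrete Y) :
    φ ⁻¹' s ∈ codiscrete Z := by
  simp only [mem_codiscrete, disjoint_principal_right, compl_compl]
  exact fun z => hφ z (nhdsNE_le_codiscrete _ hs)

lemma isPreconnected_of_mem_codiscrete {E : Type*} [AddCommGroup E] [Module ℝ E]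
    [TopologicalSpace E] [ContinuousAdd E] [ContinuousSMul ℝ E] [SecondCountableTopology E]
    (hE : 1 < Module.rank ℝ E) {s : Set E} (hs : s ∈ codiscrete E) : IsPreconnected s := by
  have countable_compl : sᶜ.Countable :=
    (HereditarilyLindelofSpace.isLindelof sᶜ).countable_of_isDiscrete (mem_codiscrete'.1 hs).2
  simpa only [compl_compl] using
    (countable_compl.isConnected_compl_of_one_lt_rank hE).isPreconnected

end Codiscrete

lemma norm_le_mul_norm_add_of_mem_ball {E : Type*} [SeminormedAddCommGroup E] {a x y : E} {δ : ℝ}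
    (hδ : 0 < δ) (ha : 2 * δ ≤ ‖a + x‖) (hy : y ∈ Metric.ball x δ) :
    ‖a‖ ≤ (2 + ‖x‖ / δ) * ‖a + y‖ := by
  rw [mem_ball_iff_norm] at hy
  have norm_y_le : ‖y‖ ≤ ‖x‖ + δ := by linarith [norm_sub_norm_le y x]
  have le_norm_add : δ ≤ ‖a + y‖ := by
    have : ‖a + x‖ - ‖y - x‖ ≤ ‖(a + x) + (y - x)‖ := norm_sub_le_norm_add _ _
    rw [add_add_sub_cancel] at this
    linarith
  calc ‖a‖ ≤ ‖a + y‖ + ‖y‖ := by simpa only [add_sub_cancel_right] using norm_sub_le (a + y) y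
    _ ≤ ‖a + y‖ + (‖x‖ / δ * δ + δ) := by rw [div_mul_cancel₀ _ hδ.ne']; gcongr
    _ ≤ ‖a + y‖ + (‖x‖ / δ * ‖a + y‖ + ‖a + y‖) := by gcongr
    _ = (2 + ‖x‖ / δ) * ‖a + y‖ := by ring

/-- The series `∑ cᵢ / (lᵢ + z)` of simple poles, with residue `cᵢ` at `-lᵢ`. At a point `z = -lᵢ`
the value is finite, because the singular term is read as `0⁻¹ • cᵢ = 0`. -/
noncomputable def poleSeries {ι X : Type*} [NormedAddCommGroup X] [NormedSpace ℂ X]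
    (l : ι → ℂ) (c : ι → X) (z : ℂ) : X :=
  ∑' i, (l i + z)⁻¹ • c i

namespace poleSeries

variable {ι : Type*} {l : ι → ℂ}

lemma compl_range_neg_mem_codiscrete (hl : Tendsto l cofinite (cocompact ℂ)) :
    (range (-l))ᶜ ∈ codiscrete ℂ :=
  compl_range_mem_codiscrete_of_tendsto_cocompact
    ((Homeomorph.neg ℂ).isClosedEmbedding.tendsto_cocompact.comp hl)

lemma isOpen_compl_range_neg (hl : Tendsto l cofinite (cocompact ℂ)) : IsOpen (range (-l))ᶜ :=
  (mem_codiscrete'.1 (compl_range_neg_mem_codiscrete hl)).1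

lemma exists_eventually_norm_inv_le (hl₀ : ∀ i, l i ≠ 0) (hl : Tendsto l cofinite (cocompact ℂ))
    {z₀ : ℂ} (hz₀ : z₀ ∉ range (-l)) :
    ∃ C : ℝ, ∀ᶠ z in 𝓝 z₀, ∀ i, ‖(l i + z)⁻¹‖ ≤ C / ‖l i‖ := by
  obtain ⟨ε, hε, hball⟩ := Metric.isOpen_iff.1 (isOpen_compl_range_neg hl) z₀ hz₀
  have le_norm_add (i : ι) : 2 * (ε / 2) ≤ ‖l i + z₀‖ := by
    have : -l i ∉ Metric.ball z₀ ε := fun h => hball h ⟨i, rfl⟩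
    rw [mem_ball_iff_norm', sub_neg_eq_add, not_lt] at this
    linarith [add_comm z₀ (l i) ▸ this]
  refine ⟨2 + ‖z₀‖ / (ε / 2), ?_⟩
  filter_upwards [Metric.ball_mem_nhds z₀ (half_pos hε)] with z hz i
  have norm_le := norm_le_mul_norm_add_of_mem_ball (half_pos hε) (le_norm_add i) hz
  have norm_pos : 0 < ‖l i + z‖ :=
    pos_of_mul_pos_right ((norm_pos_iff.2 (hl₀ i)).trans_le norm_le) (by positivity)
  rw [norm_inv, inv_eq_one_div, div_le_div_iff₀ norm_pos (norm_pos_iff.2 (hl₀ i)), one_mul]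
  exact norm_le

variable {X : Type*} [NormedAddCommGroup X] [NormedSpace ℂ X] {c : ι → X}

lemma norm_inv_smul_le {a z : ℂ} {x : X} {C : ℝ} (h : ‖(a + z)⁻¹‖ ≤ C / ‖a‖) :
    ‖(a + z)⁻¹ • x‖ ≤ C * (‖x‖ / ‖a‖) := by
  rw [norm_smul, mul_div_left_comm, mul_comm]
  gcongr

variable [CompleteSpace X]

lemma summable (hl₀ : ∀ i, l i ≠ 0) (hl : Tendsto l cofinite (cocompact ℂ))
    (hc : Summable fun i => ‖c i‖ / ‖l i‖) {z : ℂ} (hz : z ∉ range (-l)) :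
    Summable fun i => (l i + z)⁻¹ • c i := by
  obtain ⟨C, hC⟩ := exists_eventually_norm_inv_le hl₀ hl hz
  exact (hc.mul_left C).of_norm_bounded fun i => norm_inv_smul_le (hC.self_of_nhds i)

lemma differentiableAt (hl₀ : ∀ i, l i ≠ 0) (hl : Tendsto l cofinite (cocompact ℂ))
    (hc : Summable fun i => ‖c i‖ / ‖l i‖) {z₀ : ℂ} (hz₀ : z₀ ∉ range (-l)) :
    DifferentiableAt ℂ (poleSeries l c) z₀ := by
  obtain ⟨C, hC⟩ := exists_eventually_norm_inv_le hl₀ hl hz₀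
  obtain ⟨U, hU, hUo, hzU⟩ := eventually_nhds_iff.1
    (hC.and ((isOpen_compl_range_neg hl).mem_nhds hz₀))
  refine (differentiableOn_tsum_of_summable_norm (hc.mul_left C) (fun i z hz => ?_) hUo
    fun i z hz => norm_inv_smul_le ((hU z hz).1 i)).differentiableAt (hUo.mem_nhds hzU)
  have add_ne_zero : l i + z ≠ 0 := fun h => (hU z hz).2 ⟨i, neg_eq_of_add_eq_zero_right h⟩
  exact (((differentiableAt_id.const_add _).inv add_ne_zero).smul_const _).differentiableWithinAt

lemma eq_add_compl_singleton {z : ℂ} (h : Summable fun i => (l i + z)⁻¹ • c i) (i : ι) :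
    poleSeries l c z = (l i + z)⁻¹ • c i +
      poleSeries (fun j : ({i}ᶜ : Set ι) => l j) (fun j => c j) z := by
  rw [poleSeries, ← h.tsum_subtype_add_tsum_subtype_compl {i},
    tsum_singleton i fun j => (l j + z)⁻¹ • c j, poleSeries]

lemma tendsto_add_smul_nhdsNE (hl_inj : Function.Injective l) (hl₀ : ∀ i, l i ≠ 0)
    (hl : Tendsto l cofinite (cocompact ℂ)) (hc : Summable fun i => ‖c i‖ / ‖l i‖) (i : ι) :
    Tendsto (fun z => (l i + z) • poleSeries l c z) (𝓝[≠] (-l i)) (𝓝 (c i)) := by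
  set R : ℂ → X := poleSeries (fun j : ({i}ᶜ : Set ι) => l j) (fun j => c j)
  have continuousAt_R : ContinuousAt R (-l i) := by
    refine (differentiableAt (l := fun j : ({i}ᶜ : Set ι) => l j) (fun j => hl₀ j)
      (hl.comp Subtype.val_injective.tendsto_cofinite) (hc.subtype _) ?_).continuousAt
    rintro ⟨j, hj⟩
    exact j.2 (hl_inj (neg_injective hj))
  have tendsto_regular : Tendsto (fun z => c i + (l i + z) • R z) (𝓝[≠] (-l i)) (𝓝 (c i)) := by
    have : ContinuousAt (fun z => c i + (l i + z) • R z) (-l i) := by fun_prop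
    simpa using this.tendsto.mono_left nhdsWithin_le_nhds
  have eventually_notMem : ∀ᶠ z in 𝓝[≠] (-l i), z ∉ range (-l) :=
    nhdsNE_le_codiscrete _ (compl_range_neg_mem_codiscrete hl)
  refine tendsto_regular.congr' ?_
  filter_upwards [eventually_notMem] with z hz
  have add_ne_zero : l i + z ≠ 0 := fun h => hz ⟨i, neg_eq_of_add_eq_zero_right h⟩
  rw [eq_add_compl_singleton (summable hl₀ hl hc hz) i, smul_add, smul_inv_smul₀ add_ne_zero]

variable {φ : ℂ → ℂ} {c₁ c₂ : ι → X} {s₁ s₂ : ℂ → ℂ} {g : ℂ → X}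

lemma eqOn_of_frequently_eq (hl₀ : ∀ i, l i ≠ 0) (hl : Tendsto l cofinite (cocompact ℂ))
    (hc₁ : Summable fun i => ‖c₁ i‖ / ‖l i‖) (hc₂ : Summable fun i => ‖c₂ i‖ / ‖l i‖)
    (hφ : Differentiable ℂ φ) (hφ' : ∀ w, Tendsto φ (𝓝[≠] w) (𝓝[≠] (φ w)))
    (hs₁ : Differentiable ℂ s₁) (hs₂ : Differentiable ℂ s₂) (hg : Differentiable ℂ g)
    {w₀ : ℂ} (hw₀ : φ w₀ ∉ range (-l))
    (h : ∃ᶠ w in 𝓝[≠] w₀,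
      g w = s₁ w • poleSeries l c₁ (φ w) - s₂ w • poleSeries l c₂ (φ w)) :
    EqOn g (fun w => s₁ w • poleSeries l c₁ (φ w) - s₂ w • poleSeries l c₂ (φ w))
      (φ ⁻¹' (range (-l))ᶜ) := by
  have mem_codiscrete_U : φ ⁻¹' (range (-l))ᶜ ∈ codiscrete ℂ :=
    preimage_mem_codiscrete hφ' (compl_range_neg_mem_codiscrete hl)
  have isOpen_U : IsOpen (φ ⁻¹' (range (-l))ᶜ) := (isOpen_compl_range_neg hl).preimage hφ.continuous
  have isPreconnected_U : IsPreconnected (φ ⁻¹' (range (-l))ᶜ) :=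
    isPreconnected_of_mem_codiscrete (by simp) mem_codiscrete_U
  refine (hg.differentiableOn.analyticOnNhd isOpen_U).eqOn_of_preconnected_of_frequently_eq
    (DifferentiableOn.analyticOnNhd (fun w hw => ?_) isOpen_U) isPreconnected_U hw₀ h
  have comp_differentiableAt {c : ι → X} (hc : Summable fun i => ‖c i‖ / ‖l i‖) :
      DifferentiableAt ℂ (fun w => poleSeries l c (φ w)) w :=
    (differentiableAt hl₀ hl hc hw).comp w (hφ w)
  exact (((hs₁ w).smul (comp_differentiableAt hc₁)).sub
    ((hs₂ w).smul (comp_differentiableAt hc₂))).differentiableWithinAt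

lemma smul_eq_smul_of_frequently_eq (hl_inj : Function.Injective l) (hl₀ : ∀ i, l i ≠ 0)
    (hl : Tendsto l cofinite (cocompact ℂ))
    (hc₁ : Summable fun i => ‖c₁ i‖ / ‖l i‖) (hc₂ : Summable fun i => ‖c₂ i‖ / ‖l i‖)
    (hφ : Differentiable ℂ φ) (hφ' : ∀ w, Tendsto φ (𝓝[≠] w) (𝓝[≠] (φ w)))
    (hs₁ : Differentiable ℂ s₁) (hs₂ : Differentiable ℂ s₂) (hg : Differentiable ℂ g)
    {w₀ : ℂ} (hw₀ : φ w₀ ∉ range (-l))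
    (h : ∃ᶠ w in 𝓝[≠] w₀,
      g w = s₁ w • poleSeries l c₁ (φ w) - s₂ w • poleSeries l c₂ (φ w))
    {w : ℂ} {i : ι} (hw : φ w = -l i) : s₁ w • c₁ i = s₂ w • c₂ i := by
  have tendsto_residue {c : ι → X} (hc : Summable fun i => ‖c i‖ / ‖l i‖) {s : ℂ → ℂ}
      (hs : Differentiable ℂ s) :
      Tendsto (fun v => s v • (l i + φ v) • poleSeries l c (φ v)) (𝓝[≠] w) (𝓝 (s w • c i)) :=
    (hs.continuous.continuousAt.mono_left nhdsWithin_le_nhds).smul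
      ((tendsto_add_smul_nhdsNE hl_inj hl₀ hl hc i).comp (hw ▸ hφ' w))
  have tendsto_zero : Tendsto (fun v => (l i + φ v) • g v) (𝓝[≠] w) (𝓝 0) := by
    have : Continuous fun v => (l i + φ v) • g v :=
      (hφ.continuous.const_add _).smul hg.continuous
    simpa [hw] using (this.tendsto w).mono_left nhdsWithin_le_nhds
  have eventually_notMem : ∀ᶠ v in 𝓝[≠] w, φ v ∉ range (-l) :=
    hφ' w (nhdsNE_le_codiscrete _ (compl_range_neg_mem_codiscrete hl))
  have eqOn := eqOn_of_frequently_eq hl₀ hl hc₁ hc₂ hφ hφ' hs₁ hs₂ hg hw₀ h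
  refine sub_eq_zero.1 (tendsto_nhds_unique ((tendsto_residue hc₁ hs₁).sub
    (tendsto_residue hc₂ hs₂)) (tendsto_zero.congr' ?_))
  filter_upwards [eventually_notMem] with v hv
  rw [eqOn hv, smul_sub, smul_comm _ (s₁ v), smul_comm _ (s₂ v)]

end poleSeries

/-- The set of all values of the multivalued power `b ^ (1 / α)`, one for each logarithm of `b`. -/
def rootValues (α : ℝ) (b : ℂ) : Set ℂ :=
  exp '' {w | exp (w * α) = b}

namespace rootValues

variable {α : ℝ}

lemma injective_exp_add_int_mul_div_of_irrational (hα : Irrational α) (a : ℂ) :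
    Function.Injective fun k : ℤ => exp ((a + k * (2 * Real.pi * I)) / α) := by
  intro j k hjk
  obtain ⟨m, hm⟩ := exp_eq_exp_iff_exists_int.1 hjk
  have hα₀ : (α : ℂ) ≠ 0 := ofReal_ne_zero.2 hα.ne_zero
  have sub_eq : (m : ℝ) * α = (j - k : ℤ) := by
    have : (m : ℂ) * α = j - k := by
      field_simp at hm
      exact mul_left_cancel₀ two_pi_I_ne_zero (by linear_combination -hm)
    exact_mod_cast this
  have m_eq_zero : m = 0 := by
    by_contra hm₀
    exact (hα.intCast_mul hm₀).ne_int _ sub_eq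
  rw [m_eq_zero, Int.cast_zero, zero_mul, eq_comm, Int.cast_eq_zero] at sub_eq
  exact sub_eq_zero.1 sub_eq

lemma infinite_of_irrational (hα : Irrational α) {b : ℂ} (hb : b ≠ 0) :
    (rootValues α b).Infinite := by
  refine (infinite_range_of_injective
    (injective_exp_add_int_mul_div_of_irrational hα (log b))).mono ?_
  rintro _ ⟨k, rfl⟩
  refine ⟨_, ?_, rfl⟩
  rw [mem_ofPred_eq, div_mul_cancel₀ _ (ofReal_ne_zero.2 hα.ne_zero), exp_add, exp_log hb,
    exp_int_mul_two_pi_mul_I, mul_one]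

lemma subset_sphere (hα : α ≠ 0) (b : ℂ) :
    rootValues α b ⊆ Metric.sphere 0 (Real.exp (Real.log ‖b‖ / α)) := by
  rintro _ ⟨w, rfl, rfl⟩
  rw [mem_sphere_zero_iff_norm, norm_exp, norm_exp, Real.log_exp, re_mul_ofReal,
    mul_div_cancel_right₀ _ hα]

lemma exists_accPt_of_irrational (hα : Irrational α) {b : ℂ} (hb : b ≠ 0) :
    ∃ x, AccPt x (𝓟 (rootValues α b)) := by
  obtain ⟨x, -, hx⟩ := (infinite_of_irrational hα hb).exists_accPt_of_subset_isCompact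
    (isCompact_sphere _ _) (subset_sphere hα.ne_zero b)
  exact ⟨x, hx⟩

end rootValues

lemma tendsto_exp_mul_nhdsNE {a : ℂ} (ha : a ≠ 0) (w : ℂ) :
    Tendsto (fun v => exp (v * a)) (𝓝[≠] w) (𝓝[≠] (exp (w * a))) :=
  ((hasDerivAt_mul_const a).cexp).tendsto_nhdsNE (mul_ne_zero (exp_ne_zero _) ha)

lemma summable_norm_div_of_summable_add_div {ι E F : Type*} [SeminormedAddCommGroup E]
    [SeminormedAddCommGroup F] {a : ι → E} {b : ι → F} {r : ι → ℝ} (hr : ∀ i, 0 ≤ r i)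
    (h : Summable fun i => (‖a i‖ + ‖b i‖) / r i) :
    (Summable fun i => ‖a i‖ / r i) ∧ Summable fun i => ‖b i‖ / r i :=
  ⟨h.of_nonneg_of_le (fun i => div_nonneg (norm_nonneg _) (hr i)) fun i =>
      div_le_div_of_nonneg_right (le_add_of_nonneg_right (norm_nonneg _)) (hr i),
    h.of_nonneg_of_le (fun i => div_nonneg (norm_nonneg _) (hr i)) fun i =>
      div_le_div_of_nonneg_right (le_add_of_nonneg_left (norm_nonneg _)) (hr i)⟩

lemma tendsto_ofReal_cofinite_cocompact {ι : Type*} {l : ι → ℝ} (hl : Tendsto l cofinite atTop) :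
    Tendsto (fun i => (l i : ℂ)) cofinite (cocompact ℂ) :=
  isometry_ofReal.isClosedEmbedding.tendsto_cocompact.comp (hl.mono_right atTop_le_cocompact)

lemma ofReal_notMem_range_neg_ofReal {ι : Type*} {l : ι → ℝ} (hl : ∀ i, 0 < l i) {x : ℝ}
    (hx : 0 ≤ x) : (x : ℂ) ∉ range (-fun i => (l i : ℂ)) := by
  rintro ⟨i, hi⟩
  rw [Pi.neg_apply, ← ofReal_neg, ofReal_inj] at hi
  linarith [hl i]

theorem source_terms_coincide_general {ι X : Type*} [NormedAddCommGroup X] [NormedSpace ℂ X]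
    [CompleteSpace X] {α : ℝ} (hα : Irrational α) {l : ι → ℂ} (hl_inj : Function.Injective l)
    (hl₀ : ∀ i, l i ≠ 0) (hl : Tendsto l cofinite (cocompact ℂ)) {c₁ c₂ : ι → X}
    (hc : Summable fun i => (‖c₁ i‖ + ‖c₂ i‖) / ‖l i‖)
    {S₁ S₂ : ℂ → ℂ} (hS₁ : Differentiable ℂ S₁) (hS₂ : Differentiable ℂ S₂)
    {G : ℂ → X} (hG : DifferentiableOn ℂ G {0}ᶜ)
    {p₀ : ℂ} (hp₀ : p₀ ∈ slitPlane) (hp₀l : p₀ ^ (α : ℂ) ∉ range (-l))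
    (hGS : ∃ᶠ p in 𝓝[≠] p₀, G p =
      S₁ p • poleSeries l c₁ (p ^ (α : ℂ)) - S₂ p • poleSeries l c₂ (p ^ (α : ℂ)))
    (p : ℂ) (i : ι) : S₁ p • c₁ i = S₂ p • c₂ i := by
  obtain ⟨hc₁, hc₂⟩ := summable_norm_div_of_summable_add_div (fun i => norm_nonneg (l i)) hc
  have exp_log_mul {q : ℂ} (hq : q ≠ 0) : exp (log q * α) = q ^ (α : ℂ) :=
    (cpow_def_of_ne_zero hq _).symm
  have hp₀_ne := slitPlane_ne_zero hp₀
  have tendsto_log : Tendsto log (𝓝[≠] p₀) (𝓝[≠] (log p₀)) :=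
    (hasDerivAt_log hp₀).tendsto_nhdsNE (inv_ne_zero hp₀_ne)
  have frequently_log := tendsto_log.frequently (p := fun w => G (exp w) =
      S₁ (exp w) • poleSeries l c₁ (exp (w * α)) - S₂ (exp w) • poleSeries l c₂ (exp (w * α))) <| by
    refine (hGS.and_eventually (nhdsWithin_le_nhds (eventually_ne_nhds hp₀_ne))).mono ?_
    rintro q ⟨hq, hq_ne⟩
    rwa [exp_log hq_ne, exp_log_mul hq_ne]
  have hG_exp : Differentiable ℂ fun w => G (exp w) := fun w =>
    (hG.differentiableAt (isOpen_ne.mem_nhds (exp_ne_zero w))).comp w differentiableAt_exp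
  have eq_on_roots : ∀ q ∈ rootValues α (-l i), S₁ q • c₁ i = S₂ q • c₂ i := by
    rintro _ ⟨w, hw, rfl⟩
    exact poleSeries.smul_eq_smul_of_frequently_eq hl_inj hl₀ hl hc₁ hc₂ (by fun_prop)
      (tendsto_exp_mul_nhdsNE (ofReal_ne_zero.2 hα.ne_zero)) (hS₁.comp differentiable_exp)
      (hS₂.comp differentiable_exp) hG_exp (by rwa [exp_log_mul hp₀_ne]) frequently_log hw
  obtain ⟨x, hx⟩ := rootValues.exists_accPt_of_irrational hα (neg_ne_zero.2 (hl₀ i))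
  exact congrFun (AnalyticOnNhd.eq_of_frequently_eq
    (fun q _ => (hS₁.smul_const (c₁ i)).analyticAt q)
    (fun q _ => (hS₂.smul_const (c₂ i)).analyticAt q)
    ((accPt_iff_frequently_nhdsNE.1 hx).mono eq_on_roots)) p

/-- Abstract analytic core of Theorem 1.2: for irrational `α ∈ (0,1)`, if
`G(p) = S₁(p) ∑ₙ cₙ¹/(λₙ + p^α) − S₂(p) ∑ₙ cₙ²/(λₙ + p^α)` on the cut plane
with `G`, `S₁`, `S₂` entire, then `S₁(p)·cₙ¹ = S₂(p)·cₙ²` everywhere. -/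
theorem source_terms_coincide
    {X : Type*} [NormedAddCommGroup X] [NormedSpace ℂ X] [CompleteSpace X]
    (α : ℝ) (hα : α ∈ Ioo (0:ℝ) 1) (hirr : Irrational α)
    (l : ℕ → ℝ) (hl : StrictMono l) (hlpos : ∀ n, 0 < l n)
    (hltop : Tendsto l atTop atTop)
    (c₁ c₂ : ℕ → X)
    (hc : Summable (fun n => (‖c₁ n‖ + ‖c₂ n‖) / l n))
    (S₁ S₂ : ℂ → ℂ) (hS₁ : Differentiable ℂ S₁) (hS₂ : Differentiable ℂ S₂)
    (G : ℂ → X) (hG : Differentiable ℂ G)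
    (hGS : ∀ p ∈ Complex.slitPlane,
      G p = S₁ p • (∑' n, ((l n : ℂ) + p ^ (α : ℂ))⁻¹ • c₁ n)
        - S₂ p • (∑' n, ((l n : ℂ) + p ^ (α : ℂ))⁻¹ • c₂ n)) :
    ∀ p : ℂ, ∀ n : ℕ, S₁ p • c₁ n = S₂ p • c₂ n := by
  exact source_terms_coincide_general (l := fun n => (l n : ℂ)) hirr
    (ofReal_injective.comp hl.injective)
    (fun n => ofReal_ne_zero.2 (hlpos n).ne')
    (tendsto_ofReal_cofinite_cocompact (Nat.cofinite_eq_atTop ▸ hltop))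
    (by simpa only [norm_real, Real.norm_of_nonneg (hlpos _).le] using hc)
    hS₁ hS₂ hG.differentiableOn one_mem_slitPlane
    (by simpa only [one_cpow, ofReal_one] using ofReal_notMem_range_neg_ofReal hlpos zero_le_one)
    (eventually_of_mem (mem_nhdsWithin_of_mem_nhds (isOpen_slitPlane.mem_nhds one_mem_slitPlane))
      hGS).frequently
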